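/- Let K := ∫₀¹ ds/√(1 − s⁴) and B_n := (2n+1)(π²/K²)·(−1)^{n+1} e^{−(n+1/2)π}/(1 + e^{−(2n+1)π}). For μ > 0, λ > 0 define m_n(μ, λ) := (2n+1)(π/2K)(λ/2)^{1/4} μ and, for real s with s < m₀(μ,λ)², G(s, μ, λ) := Σ_{n≥0} B_n/(s − m_n(μ,λ)²). Then G is differentiable in μ and λ and satisfies the renormalization-group scaling identity μ ∂G/∂μ − 4λ ∂G/∂λ = 0 (the anomalous dimension is γ = 0 and the beta function at the trivial infrared fixed point is β(λ) = 4λ). -/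

import Mathlib

open Real

/-- The complete elliptic integral `K(i) = ∫₀¹ ds/√(1 − s⁴)`. -/
noncomputable def Kell : ℝ := ∫ s in (0:ℝ)..1, 1 / Real.sqrt (1 - s ^ 4)

/-- The residues `B_n = (2n+1)(π²/K²)(−1)^{n+1} e^{−(n+1/2)π}/(1 + e^{−(2n+1)π})`
of the infrared propagator. -/
noncomputable def Bcoef (n : ℕ) : ℝ :=
  (2 * (n : ℝ) + 1) * (π ^ 2 / Kell ^ 2) *
    ((-1) ^ (n + 1) * Real.exp (-(((n : ℝ) + 1 / 2)) * π)) / (1 + Real.exp (-(2 * (n : ℝ) + 1) * π))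

/-- The masses `m_n(μ,λ) = (2n+1)(π/2K)(λ/2)^{1/4} μ`. -/
noncomputable def mass (n : ℕ) (mu lam : ℝ) : ℝ :=
  (2 * (n : ℝ) + 1) * (π / (2 * Kell)) * (lam / 2) ^ ((1:ℝ)/4) * mu

/-- The infrared propagator `G(s, μ, λ) = Σ_n B_n/(s − m_n(μ,λ)²)`. -/
noncomputable def Gprop (s mu lam : ℝ) : ℝ :=
  ∑' n : ℕ, Bcoef n / (s - mass n mu lam ^ 2)

/-!
Since `m_n = (2n+1) m₀`, the propagator depends on `(μ, λ)` only through `t = m₀(μ,λ)²`: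
`G(s, μ, λ) = F(t)` with

  `F(t) = Σ_n B_n / (s − (2n+1)² t) = Σ_n w_n / (x_n − t)`,
  `w_n = B_n / (2n+1)²`, `x_n = s / (2n+1)²`.

This is a series of simple poles with summable weights. Off the closure of the set of poles,
`|x_n − t|` is locally bounded below, the termwise derivatives `w_n / (x_n − t)²` are dominated by
a multiple of `|w_n|`, and the sum is differentiable. As `x_n → 0`, that closure adds
only the point `0`, so `F` is differentiable at every `t ≠ 0` which is not a pole. Finally `t` is
proportional to `μ² λ^{1/2}`, so `μ ∂t/∂μ = 2t = 4λ ∂t/∂λ`, and the chain rule turns this into the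
identity for `G`.
-/

open Set Filter Topology MeasureTheory

lemma exists_ball_forall_le_dist {ι X : Type*} [PseudoMetricSpace X] {x : ι → X} {z : X}
    (hz : z ∉ closure (range x)) : ∃ δ > 0, ∀ y ∈ Metric.ball z δ, ∀ i, δ ≤ dist (x i) y := by
  obtain ⟨ε, hε, hgap⟩ : ∃ ε > 0, ∀ i, ε ≤ dist z (x i) := by
    simpa [Metric.mem_closure_range_iff] using hz
  refine ⟨ε / 2, half_pos hε, fun y hy i => ?_⟩
  rw [dist_comm]
  linarith [hgap i, dist_triangle z y (x i), Metric.mem_ball'.mp hy]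

lemma hasDerivAt_tsum_div_sub {ι 𝕜 : Type*} [RCLike 𝕜] {w x : ι → 𝕜} {z : 𝕜}
    (hw : Summable w) (hz : z ∉ closure (range x)) :
    HasDerivAt (fun y => ∑' i, w i / (x i - y)) (∑' i, w i / (x i - z) ^ 2) z := by
  obtain ⟨δ, hδ, hgap⟩ := exists_ball_forall_le_dist hz
  simp only [dist_eq_norm (x _)] at hgap
  have hmem : z ∈ Metric.ball z δ := Metric.mem_ball_self hδ
  have hderiv (i : ι) (y : 𝕜) (hy : y ∈ Metric.ball z δ) :
      HasDerivAt (fun y => w i / (x i - y)) (w i / (x i - y) ^ 2) y := by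
    have hne : x i - y ≠ 0 := norm_pos_iff.mp (hδ.trans_le (hgap y hy i))
    simpa using (hasDerivAt_const y (w i)).fun_div ((hasDerivAt_id' y).const_sub (x i)) hne
  have hderiv_le (i : ι) (y : 𝕜) (hy : y ∈ Metric.ball z δ) :
      ‖w i / (x i - y) ^ 2‖ ≤ ‖w i‖ / δ ^ 2 := by
    rw [norm_div, norm_pow]
    gcongr
    exact hgap y hy i
  have hsummable : Summable fun i => w i / (x i - z) := by
    refine .of_norm_bounded (hw.norm.div_const δ) fun i => ?_
    rw [norm_div]
    gcongr
    exact hgap z hmem i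
  exact hasDerivAt_tsum_of_isPreconnected (hw.norm.div_const (δ ^ 2)) Metric.isOpen_ball
    (convex_ball z δ).isPreconnected hderiv hderiv_le hmem hsummable hmem

lemma notMem_closure_range_of_tendsto {X : Type*} [TopologicalSpace X] [T2Space X]
    {u : ℕ → X} {a b : X} (hu : Tendsto u atTop (𝓝 a)) (ha : b ≠ a) (hb : ∀ n, b ≠ u n) :
    b ∉ closure (range u) := by
  have hclosure : closure (range u) ⊆ insert a (range u) :=
    closure_minimal (subset_insert _ _) hu.isCompact_insert_range.isClosed
  refine fun hmem => (hclosure hmem).elim ha ?_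
  rintro ⟨n, hn⟩
  exact hb n hn.symm

lemma intervalIntegrable_one_div_sqrt_one_sub_pow {k : ℕ} (hk : k ≠ 0) :
    IntervalIntegrable (fun x : ℝ => 1 / √(1 - x ^ k)) volume 0 1 := by
  have hmajorant : IntervalIntegrable (fun x : ℝ => (1 - x) ^ (-(1 / 2) : ℝ)) volume 0 1 := by
    simpa using ((intervalIntegral.intervalIntegrable_rpow' (a := 0) (b := 1)
      (by norm_num : (-1 : ℝ) < -(1 / 2))).comp_sub_left 1).symm
  refine hmajorant.mono_fun' (by measurability) ?_
  rw [uIoc_of_le zero_le_one, ← restrict_Ioo_eq_restrict_Ioc]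
  filter_upwards [ae_restrict_mem measurableSet_Ioo] with x ⟨hx0, hx1⟩
  have hx : 0 < 1 - x := sub_pos.mpr hx1
  have hpow : x ^ k ≤ x := pow_le_of_le_one hx0.le hx1.le hk
  rw [rpow_neg hx.le, ← sqrt_eq_rpow, norm_of_nonneg (by positivity), one_div]
  gcongr

lemma Kell_pos : 0 < Kell := by
  refine intervalIntegral.intervalIntegral_pos_of_pos_on
    (intervalIntegrable_one_div_sqrt_one_sub_pow four_ne_zero) (fun x hx => ?_) one_pos
  have : 0 < 1 - x ^ 4 := sub_pos.mpr (pow_lt_one₀ hx.1.le hx.2 four_ne_zero)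
  positivity

lemma abs_Bcoef_le (n : ℕ) :
    |Bcoef n| ≤ (2 * (n : ℝ) + 1) * (π ^ 2 / Kell ^ 2) * exp (-n) := by
  have hexp : exp (-((n : ℝ) + 1 / 2) * π) ≤ exp (-n) := by
    gcongr
    nlinarith [pi_gt_three, n.cast_nonneg (α := ℝ)]
  have hdenom : 1 ≤ 1 + exp (-(2 * (n : ℝ) + 1) * π) :=
    le_add_of_nonneg_right (exp_nonneg _)
  calc |Bcoef n|
      = (2 * (n : ℝ) + 1) * (π ^ 2 / Kell ^ 2) * exp (-((n : ℝ) + 1 / 2) * π) /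
          (1 + exp (-(2 * (n : ℝ) + 1) * π)) := by
        rw [Bcoef, abs_div, abs_mul, abs_mul _ (exp _), abs_neg_one_pow, one_mul, abs_exp,
          abs_of_nonneg (by positivity), abs_of_pos (zero_lt_one.trans_le hdenom)]
    _ ≤ (2 * (n : ℝ) + 1) * (π ^ 2 / Kell ^ 2) * exp (-((n : ℝ) + 1 / 2) * π) :=
        div_le_self (by positivity) hdenom
    _ ≤ (2 * (n : ℝ) + 1) * (π ^ 2 / Kell ^ 2) * exp (-n) := by gcongr

lemma summable_Bcoef_div_sq : Summable fun n : ℕ => Bcoef n / (2 * (n : ℝ) + 1) ^ 2 := by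
  refine .of_norm_bounded (summable_exp_neg_nat.mul_left (π ^ 2 / Kell ^ 2)) fun n => ?_
  rw [norm_div, norm_of_nonneg (by positivity : (0 : ℝ) ≤ (2 * n + 1) ^ 2),
    div_le_iff₀ (by positivity)]
  calc |Bcoef n| ≤ (2 * (n : ℝ) + 1) * (π ^ 2 / Kell ^ 2) * exp (-n) := abs_Bcoef_le n
    _ ≤ (2 * (n : ℝ) + 1) ^ 2 * (π ^ 2 / Kell ^ 2) * exp (-n) := by
        gcongr
        exact le_self_pow₀ (by linarith [n.cast_nonneg (α := ℝ)]) two_ne_zero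
    _ = π ^ 2 / Kell ^ 2 * exp (-n) * (2 * (n : ℝ) + 1) ^ 2 := by ring

lemma mass_eq_mul_mass_zero (n : ℕ) (mu lam : ℝ) :
    mass n mu lam = (2 * (n : ℝ) + 1) * mass 0 mu lam := by
  simp only [mass, Nat.cast_zero]
  ring

lemma sq_mass_eq_mul_sq_mass_zero (n : ℕ) (mu lam : ℝ) :
    mass n mu lam ^ 2 = (2 * (n : ℝ) + 1) ^ 2 * mass 0 mu lam ^ 2 := by
  rw [mass_eq_mul_mass_zero, mul_pow]

lemma sq_mass_zero_le (n : ℕ) (mu lam : ℝ) : mass 0 mu lam ^ 2 ≤ mass n mu lam ^ 2 := by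
  rw [sq_mass_eq_mul_sq_mass_zero n]
  exact le_mul_of_one_le_left (sq_nonneg _) (one_le_pow₀ (by linarith [n.cast_nonneg (α := ℝ)]))

lemma mass_ne_zero (n : ℕ) {mu lam : ℝ} (hmu : mu ≠ 0) (hlam : 0 < lam) : mass n mu lam ≠ 0 := by
  have := Kell_pos
  unfold mass
  positivity

lemma hasDerivAt_sq_mass_mu (n : ℕ) (mu lam : ℝ) :
    HasDerivAt (fun mu' => mass n mu' lam ^ 2) (2 * mass n mu lam ^ 2 / mu) mu := by
  unfold mass
  refine (((hasDerivAt_id' mu).const_mul _).fun_pow 2).congr_deriv ?_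
  field_simp
  ring

lemma hasDerivAt_sq_mass_lam (n : ℕ) (mu : ℝ) {lam : ℝ} (hlam : 0 < lam) :
    HasDerivAt (fun lam' => mass n mu lam' ^ 2) (mass n mu lam ^ 2 / (2 * lam)) lam := by
  have hpos : 0 < lam / 2 := half_pos hlam
  have hroot : HasDerivAt (fun lam' => (lam' / 2) ^ ((1 : ℝ) / 4))
      ((lam / 2) ^ ((1 : ℝ) / 4) / (4 * lam)) lam := by
    refine (((hasDerivAt_id' lam).div_const 2).rpow_const (.inl hpos.ne')).congr_deriv ?_
    rw [rpow_sub_one hpos.ne']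
    field_simp
  unfold mass
  refine (((hroot.const_mul _).mul_const mu).fun_pow 2).congr_deriv ?_
  field_simp
  ring

/-- The propagator at momentum squared `s`, as a function of the squared lowest mass `t = m₀²`. -/
noncomputable def propOfSqMass (s t : ℝ) : ℝ :=
  ∑' n : ℕ, Bcoef n / (s - (2 * (n : ℝ) + 1) ^ 2 * t)

lemma Gprop_eq_propOfSqMass (s mu lam : ℝ) :
    Gprop s mu lam = propOfSqMass s (mass 0 mu lam ^ 2) :=
  tsum_congr fun n => by rw [sq_mass_eq_mul_sq_mass_zero n]

lemma propOfSqMass_eq_tsum_div_sub (s t : ℝ) :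
    propOfSqMass s t =
      ∑' n : ℕ, Bcoef n / (2 * (n : ℝ) + 1) ^ 2 / (s / (2 * (n : ℝ) + 1) ^ 2 - t) := by
  refine tsum_congr fun n => ?_
  rw [div_div, mul_sub, mul_div_cancel₀ _ (by positivity)]

lemma tendsto_div_odd_sq (s : ℝ) :
    Tendsto (fun n : ℕ => s / (2 * (n : ℝ) + 1) ^ 2) atTop (𝓝 0) := by
  refine tendsto_const_nhds.div_atTop ((tendsto_pow_atTop two_ne_zero).comp ?_)
  exact tendsto_atTop_add_const_right _ _ (tendsto_natCast_atTop_atTop.const_mul_atTop two_pos)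

lemma differentiableAt_propOfSqMass {s t : ℝ} (ht : t ≠ 0)
    (hs : ∀ n : ℕ, s ≠ (2 * (n : ℝ) + 1) ^ 2 * t) : DifferentiableAt ℝ (propOfSqMass s) t := by
  have hpole (n : ℕ) : t ≠ s / (2 * (n : ℝ) + 1) ^ 2 := by
    rw [ne_eq, eq_div_iff (by positivity), mul_comm]
    exact (hs n).symm
  rw [funext (propOfSqMass_eq_tsum_div_sub s)]
  exact (hasDerivAt_tsum_div_sub summable_Bcoef_div_sq
    (notMem_closure_range_of_tendsto (tendsto_div_odd_sq s) ht hpole)).differentiableAt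

theorem stmt_11_general (mu lam s : ℝ) (hmu : mu ≠ 0) (hlam : 0 < lam)
    (hs : ∀ n, s ≠ mass n mu lam ^ 2) :
    DifferentiableAt ℝ (fun mu' => Gprop s mu' lam) mu ∧
    DifferentiableAt ℝ (fun lam' => Gprop s mu lam') lam ∧
    mu * deriv (fun mu' => Gprop s mu' lam) mu
      - 4 * lam * deriv (fun lam' => Gprop s mu lam') lam = 0 := by
  have hF : DifferentiableAt ℝ (propOfSqMass s) (mass 0 mu lam ^ 2) :=
    differentiableAt_propOfSqMass (pow_ne_zero 2 (mass_ne_zero 0 hmu hlam)) fun n =>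
      sq_mass_eq_mul_sq_mass_zero n mu lam ▸ hs n
  have hGmu := hF.hasDerivAt.comp mu (hasDerivAt_sq_mass_mu 0 mu lam)
  have hGlam := hF.hasDerivAt.comp lam (hasDerivAt_sq_mass_lam 0 mu hlam)
  simp only [Function.comp_def, ← Gprop_eq_propOfSqMass] at hGmu hGlam
  refine ⟨hGmu.differentiableAt, hGlam.differentiableAt, ?_⟩
  rw [hGmu.deriv, hGlam.deriv]
  field_simp
  ring

/-- Renormalization-group scaling identity: for `μ, λ > 0` and `s < m₀(μ,λ)²` the
propagator `G` is differentiable in `μ` and in `λ`, and satisfies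
`μ ∂G/∂μ − 4λ ∂G/∂λ = 0` (anomalous dimension `γ = 0`, beta function `β(λ) = 4λ`
at the trivial infrared fixed point). -/
theorem stmt_11 (mu lam s : ℝ) (hmu : 0 < mu) (hlam : 0 < lam)
    (hs : s < mass 0 mu lam ^ 2) :
    DifferentiableAt ℝ (fun mu' => Gprop s mu' lam) mu ∧
    DifferentiableAt ℝ (fun lam' => Gprop s mu lam') lam ∧
    mu * deriv (fun mu' => Gprop s mu' lam) mu
      - 4 * lam * deriv (fun lam' => Gprop s mu lam') lam = 0 := by
  exact stmt_11_general mu lam s hmu.ne' hlam fun n => (hs.trans_le (sq_mass_zero_le n mu lam)).ne
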